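/- Assume 0 < c_f < min(10^{−4}, 1/(L₁ + 6)) and b = (1 + c_f L₁)/2. For any j ∈ {1, …, Q_k} and any p ∈ [b, 1], set q = (p − b)/(1 − b). Then KL(Ber(1 − F₀(p)) ‖ Ber(1 − F_j(p))) ≤ (1/300)·w_k^{2m} if q ∈ I_j, and KL(Ber(1 − F₀(p)) ‖ Ber(1 − F_j(p))) = 0 if q ∉ I_j. -/

import Mathlib

open Set MeasureTheory

/-- The basic mollifier `u₀(x) = exp(−1/(x(1/3 − x)))` on `(0, 1/3)`, `0` elsewhere. -/
noncomputable def u0 (x : ℝ) : ℝ :=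
  if x ∈ Set.Ioo (0 : ℝ) (1 / 3) then Real.exp (-(1 / (x * (1 / 3 - x)))) else 0

/-- The normalized primitive `u(x) = (∫₀^{1/3} u₀)⁻¹ · ∫_{−∞}^x u₀`. -/
noncomputable def uFn (x : ℝ) : ℝ :=
  (∫ t in (0 : ℝ)..(1 / 3), u0 t)⁻¹ * ∫ t in Set.Iic x, u0 t

/-- `L₁ = sup_x |u'(x)|`. -/
noncomputable def L1 : ℝ := ⨆ x : ℝ, |deriv uFn x|

/-- The bump function `B`. -/
noncomputable def bump (x : ℝ) : ℝ :=
  if x < 0 then 0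
  else if x ≤ 1 / 3 then uFn x
  else if x < 2 / 3 then 1
  else if x ≤ 1 then uFn (1 - x)
  else 0

/-- The bump function rescaled to the interval `[a, b]`. -/
noncomputable def bumpOn (a b x : ℝ) : ℝ := bump ((x - a) / (b - a))

/-- The interval widths: `w 0 = 1` and `w k = 3^(−k!)` for `k ≥ 1`. -/
noncomputable def wSeq : ℕ → ℝ := fun k => if k = 0 then 1 else (3 : ℝ) ^ (-(k.factorial : ℤ))

/-- `a, b : ℕ → ℝ` describe an admissible nested sequence of intervals:
`[a₀,b₀] = [0,1]` and `[a_{k+1}, b_{k+1}]` is a subinterval of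
`[a_k + w_k/3, b_k − w_k/3]` of length `w_{k+1}`. -/
def IsNestedTower (a b : ℕ → ℝ) : Prop :=
  a 0 = 0 ∧ b 0 = 1 ∧
  ∀ k : ℕ, a k + wSeq k / 3 ≤ a (k + 1) ∧ b (k + 1) ≤ b k - wSeq k / 3 ∧
    b (k + 1) - a (k + 1) = wSeq (k + 1)

/-- The bump tower `f(x) = c_f·Σ_{k=0}^∞ w_k^m·B_{[a_k,b_k]}(x)`. -/
noncomputable def towerFn (m : ℕ) (cf : ℝ) (a b : ℕ → ℝ) (x : ℝ) : ℝ :=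
  cf * ∑' k : ℕ, wSeq k ^ m * bumpOn (a k) (b k) x

/-- `g = f/(1+f)`, the normalization of a nonnegative function `f` to `[0,1)`. -/
noncomputable def gFn (f : ℝ → ℝ) (x : ℝ) : ℝ := f x / (1 + f x)

/-- The noise distribution function built from `f` with parameter `β`. -/
noncomputable def cdfF (f : ℝ → ℝ) (β : ℝ) (x : ℝ) : ℝ :=
  if x < β then 0
  else if x ≤ 1 then 1 - β / x - (1 - β) / x * gFn f ((x - β) / (1 - β))
  else if x ≤ 1 + β then 2 - (1 + β) / x
  else 1

/-- The truncated bump tower using only the levels `i < k`. -/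
noncomputable def towerFnBelow (m k : ℕ) (cf : ℝ) (a b : ℕ → ℝ) (x : ℝ) : ℝ :=
  cf * ∑ i ∈ Finset.range k, wSeq i ^ m * bumpOn (a i) (b i) x

/-- Kullback–Leibler divergence between Bernoulli distributions with success
probabilities `p` and `q`. -/
noncomputable def klBer (p q : ℝ) : ℝ :=
  p * Real.log (p / q) + (1 - p) * Real.log ((1 - p) / (1 - q))

/-!
The divergence `KL(Ber s ‖ Ber t)` is at most the `χ²`-divergence `(s - t)² / (t (1 - t))`. On
`[β, 1]` the distribution function is `F(p) = (1 - β) / p · (q - g(q))`, so two instances with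
profiles `f` and `h` satisfy `|F₀(p) - F_j(p)| ≤ (1 - β) / p · |f(q) - h(q)|`, the map
`f ↦ f / (1 + f)` being 1-Lipschitz. Here `h - f` is `c_f` times the part of the tower from level
`k` on, which vanishes outside `I_k` because the intervals are nested, and which is at most
`3/2 · w_k^m` because the heights decay geometrically. Inside `I_k` we have `q ≥ 1/3`, so that the
denominator `F_j(p)` stays comparable to `(1 - β) / p`.
-/

section Bump

theorem u0_mem_Icc (x : ℝ) : u0 x ∈ Icc 0 1 := by
  unfold u0
  split_ifs with h
  · have hprod : 0 < x * (1 / 3 - x) := mul_pos h.1 (sub_pos.2 h.2)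
    exact ⟨(Real.exp_pos _).le, Real.exp_le_one_iff.2 (neg_nonpos.2 (one_div_pos.2 hprod).le)⟩
  · exact ⟨le_rfl, zero_le_one⟩

theorem measurable_u0 : Measurable u0 :=
  Measurable.ite measurableSet_Ioo (by fun_prop) measurable_const

theorem support_u0_subset : Function.support u0 ⊆ Ioc 0 (1 / 3) := fun _ hx =>
  Ioo_subset_Ioc_self (by_contra fun h => hx (if_neg h))

theorem integrable_u0 : Integrable u0 := by
  rw [← integrableOn_iff_integrable_of_support_subset support_u0_subset]
  refine Measure.integrableOn_of_bounded (M := 1) (by simp)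
    measurable_u0.aestronglyMeasurable (.of_forall fun x => ?_)
  rw [Real.norm_of_nonneg (u0_mem_Icc x).1]
  exact (u0_mem_Icc x).2

theorem uFn_mem_Icc (x : ℝ) : uFn x ∈ Icc 0 1 := by
  have hnonneg : ∀ t, 0 ≤ u0 t := fun t => (u0_mem_Icc t).1
  have hle : ∫ t in Iic x, u0 t ≤ ∫ t, u0 t :=
    setIntegral_le_integral integrable_u0 (.of_forall hnonneg)
  rw [uFn, intervalIntegral.integral_eq_integral_of_support_subset support_u0_subset,
    inv_mul_eq_div]
  exact ⟨div_nonneg (integral_nonneg hnonneg) (integral_nonneg hnonneg),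
    div_le_one_of_le₀ hle (integral_nonneg hnonneg)⟩

theorem bump_mem_Icc (x : ℝ) : bump x ∈ Icc 0 1 := by
  unfold bump
  split_ifs
  exacts [⟨le_rfl, zero_le_one⟩, uFn_mem_Icc x, ⟨zero_le_one, le_rfl⟩, uFn_mem_Icc (1 - x),
    ⟨le_rfl, zero_le_one⟩]

theorem bump_eq_zero_of_notMem_Icc {x : ℝ} (hx : x ∉ Icc 0 1) : bump x = 0 := by
  unfold bump
  rcases lt_or_ge x 0 with h0 | h0
  · exact if_pos h0
  · have h1 : 1 < x := not_le.1 fun h => hx ⟨h0, h⟩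
    rw [if_neg (by linarith), if_neg (by linarith), if_neg (by linarith), if_neg (by linarith)]

theorem bumpOn_eq_zero_of_notMem_Icc {a b x : ℝ} (hab : a < b) (hx : x ∉ Icc a b) :
    bumpOn a b x = 0 := by
  have hlen : 0 < b - a := sub_pos.2 hab
  refine bump_eq_zero_of_notMem_Icc fun h => hx ?_
  rw [mem_Icc, le_div_iff₀ hlen, div_le_iff₀ hlen] at h
  exact ⟨by linarith [h.1], by linarith [h.2]⟩

theorem L1_nonneg : 0 ≤ L1 := Real.iSup_nonneg fun _ => abs_nonneg _

end Bump

section Widths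

theorem wSeq_zero : wSeq 0 = 1 := if_pos rfl

theorem wSeq_pos (k : ℕ) : 0 < wSeq k := by
  unfold wSeq
  split_ifs <;> positivity

theorem wSeq_succ_le (k : ℕ) : wSeq (k + 1) ≤ wSeq k * (1 / 3) := by
  rcases Nat.eq_zero_or_pos k with rfl | hk
  · norm_num [wSeq]
  · have hfact : k.factorial < (k + 1).factorial := (Nat.factorial_lt hk).2 k.lt_succ_self
    have hexp : -((k + 1).factorial : ℤ) ≤ -(k.factorial : ℤ) - 1 := by omega
    calc wSeq (k + 1) = (3 : ℝ) ^ (-((k + 1).factorial : ℤ)) := if_neg k.succ_ne_zero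
      _ ≤ 3 ^ (-(k.factorial : ℤ) - 1) := zpow_le_zpow_right₀ (by norm_num) hexp
      _ = wSeq k * (1 / 3) := by
        rw [zpow_sub_one₀ three_ne_zero, wSeq, if_neg hk.ne', one_div]

theorem wSeq_add_le (k n : ℕ) : wSeq (k + n) ≤ wSeq k * (1 / 3) ^ n := by
  induction n with
  | zero => simp
  | succ n ih =>
    calc wSeq (k + n + 1) ≤ wSeq (k + n) * (1 / 3) := wSeq_succ_le (k + n)
      _ ≤ wSeq k * (1 / 3) ^ n * (1 / 3) := by gcongr
      _ = wSeq k * (1 / 3) ^ (n + 1) := by ring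

theorem wSeq_add_pow_le {m : ℕ} (hm : 1 ≤ m) (k n : ℕ) :
    wSeq (k + n) ^ m ≤ wSeq k ^ m * (1 / 3) ^ n :=
  calc wSeq (k + n) ^ m ≤ (wSeq k * (1 / 3) ^ n) ^ m :=
        pow_le_pow_left₀ (wSeq_pos _).le (wSeq_add_le k n) m
    _ = wSeq k ^ m * ((1 / 3) ^ n) ^ m := mul_pow ..
    _ ≤ wSeq k ^ m * (1 / 3) ^ n :=
        mul_le_mul_of_nonneg_left
          (pow_le_of_le_one (by positivity) (pow_le_one₀ (by norm_num) (by norm_num))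
            (Nat.one_le_iff_ne_zero.1 hm))
          (pow_nonneg (wSeq_pos k).le m)

end Widths

namespace IsNestedTower

variable {a b : ℕ → ℝ} (hab : IsNestedTower a b)
include hab

theorem lt (k : ℕ) : a k < b k := by
  cases k with
  | zero => rw [hab.1, hab.2.1]; exact one_pos
  | succ n => exact sub_pos.1 ((hab.2.2 n).2.2 ▸ wSeq_pos (n + 1))

theorem antitone_Icc : Antitone fun k => Icc (a k) (b k) :=
  antitone_nat_of_succ_le fun k =>
    Icc_subset_Icc (by linarith [(hab.2.2 k).1, wSeq_pos k])
      (by linarith [(hab.2.2 k).2.1, wSeq_pos k])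

theorem one_third_le {k : ℕ} (hk : 1 ≤ k) {x : ℝ} (hx : x ∈ Icc (a k) (b k)) : 1 / 3 ≤ x := by
  have hfirst : a 0 + wSeq 0 / 3 ≤ a 1 := (hab.2.2 0).1
  rw [hab.1, wSeq_zero, zero_add] at hfirst
  exact hfirst.trans (hab.antitone_Icc hk hx).1

end IsNestedTower

/-- The contribution `w_n^m · B_{[a_n,b_n]}(x)` of level `n` to a bump tower, before scaling by
`c_f`. -/
noncomputable def towerLevel (m : ℕ) (a b : ℕ → ℝ) (x : ℝ) (n : ℕ) : ℝ :=
  wSeq n ^ m * bumpOn (a n) (b n) x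

section Tower

variable {m : ℕ} {cf : ℝ} (a b : ℕ → ℝ) (x : ℝ) (k : ℕ)

theorem towerLevel_nonneg : 0 ≤ towerLevel m a b x k :=
  mul_nonneg (pow_nonneg (wSeq_pos k).le m) (bump_mem_Icc _).1

theorem towerLevel_add_le (hm : 1 ≤ m) (n : ℕ) :
    towerLevel m a b x (n + k) ≤ wSeq k ^ m * (1 / 3) ^ n :=
  calc towerLevel m a b x (n + k) ≤ wSeq (n + k) ^ m :=
        mul_le_of_le_one_right (pow_nonneg (wSeq_pos _).le m) (bump_mem_Icc _).2
    _ ≤ wSeq k ^ m * (1 / 3) ^ n := add_comm k n ▸ wSeq_add_pow_le hm k n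

theorem hasSum_mul_one_third_pow (c : ℝ) : HasSum (fun n : ℕ => c * (1 / 3) ^ n) (3 / 2 * c) := by
  have hgeom : (3 / 2 : ℝ) = (1 - 1 / 3)⁻¹ := by norm_num
  rw [mul_comm (3 / 2) c, hgeom]
  exact (hasSum_geometric_of_lt_one (by norm_num) (by norm_num)).mul_left c

theorem summable_towerLevel (hm : 1 ≤ m) : Summable (towerLevel m a b x) :=
  .of_nonneg_of_le (towerLevel_nonneg a b x) (towerLevel_add_le a b x 0 hm)
    (hasSum_mul_one_third_pow _).summable

theorem tsum_towerLevel_add_le (hm : 1 ≤ m) :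
    ∑' n, towerLevel m a b x (n + k) ≤ 3 / 2 * wSeq k ^ m :=
  hasSum_le (towerLevel_add_le a b x k hm)
    ((summable_nat_add_iff k).2 (summable_towerLevel a b x hm)).hasSum (hasSum_mul_one_third_pow _)

theorem towerFnBelow_nonneg (hcf : 0 ≤ cf) : 0 ≤ towerFnBelow m k cf a b x :=
  mul_nonneg hcf (Finset.sum_nonneg fun i _ => towerLevel_nonneg a b x i)

theorem towerFn_sub_towerFnBelow (hm : 1 ≤ m) :
    towerFn m cf a b x - towerFnBelow m k cf a b x = cf * ∑' n, towerLevel m a b x (n + k) := by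
  change cf * (∑' n, towerLevel m a b x n) - cf * ∑ n ∈ Finset.range k, towerLevel m a b x n = _
  rw [← (summable_towerLevel a b x hm).sum_add_tsum_nat_add k]
  ring

theorem towerFnBelow_le_towerFn (hm : 1 ≤ m) (hcf : 0 ≤ cf) :
    towerFnBelow m k cf a b x ≤ towerFn m cf a b x := by
  rw [← sub_nonneg, towerFn_sub_towerFnBelow a b x k hm]
  exact mul_nonneg hcf (tsum_nonneg fun n => towerLevel_nonneg a b x (n + k))

theorem towerFn_sub_towerFnBelow_le (hm : 1 ≤ m) (hcf : 0 ≤ cf) :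
    towerFn m cf a b x - towerFnBelow m k cf a b x ≤ 3 / 2 * cf * wSeq k ^ m := by
  rw [towerFn_sub_towerFnBelow a b x k hm, mul_comm (3 / 2) cf, mul_assoc]
  exact mul_le_mul_of_nonneg_left (tsum_towerLevel_add_le a b x k hm) hcf

theorem towerFn_le (hm : 1 ≤ m) (hcf : 0 ≤ cf) : towerFn m cf a b x ≤ 3 / 2 * cf := by
  simpa [towerFnBelow, wSeq_zero] using towerFn_sub_towerFnBelow_le a b x 0 hm hcf

theorem IsNestedTower.towerFn_eq_towerFnBelow {a b : ℕ → ℝ} (hab : IsNestedTower a b) {x : ℝ}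
    {k : ℕ} (hx : x ∉ Icc (a k) (b k)) : towerFn m cf a b x = towerFnBelow m k cf a b x := by
  have hvanish : ∀ n ∉ Finset.range k, wSeq n ^ m * bumpOn (a n) (b n) x = 0 := fun n hn => by
    have hkn : k ≤ n := by simpa using hn
    rw [bumpOn_eq_zero_of_notMem_Icc (hab.lt n) fun h => hx (hab.antitone_Icc hkn h), mul_zero]
  rw [towerFn, towerFnBelow, tsum_eq_sum hvanish]

end Tower

section BernoulliDivergence

theorem klBer_self (p : ℝ) : klBer p p = 0 := by
  have hlog : ∀ x : ℝ, x * Real.log (x / x) = 0 := fun x => by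
    rcases eq_or_ne x 0 with rfl | hx <;> simp [*]
  rw [klBer, hlog, hlog, add_zero]

theorem klBer_one_sub_one_sub (p q : ℝ) : klBer (1 - p) (1 - q) = klBer p q := by
  simp only [klBer, sub_sub_cancel, add_comm]

theorem mul_log_div_le {p q : ℝ} (hp : 0 ≤ p) (hq : 0 < q) :
    p * Real.log (p / q) ≤ p * (p / q - 1) := by
  rcases hp.eq_or_lt with rfl | hp
  · simp
  · exact mul_le_mul_of_nonneg_left (Real.log_le_sub_one_of_pos (div_pos hp hq)) hp.le

theorem klBer_le_sq_div {p q : ℝ} (hp : p ∈ Icc 0 1) (hq : q ∈ Ioo 0 1) :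
    klBer p q ≤ (p - q) ^ 2 / (q * (1 - q)) := by
  have hq' : 0 < 1 - q := sub_pos.2 hq.2
  calc klBer p q ≤ p * (p / q - 1) + (1 - p) * ((1 - p) / (1 - q) - 1) :=
        add_le_add (mul_log_div_le hp.1 hq.1) (mul_log_div_le (sub_nonneg.2 hp.2) hq')
    _ = (p - q) ^ 2 / (q * (1 - q)) := by
        have := hq.1.ne'
        field_simp
        ring

end BernoulliDivergence

section NoiseDistribution

variable {f h : ℝ → ℝ} {β p q : ℝ}

theorem gFn_nonneg (hf : 0 ≤ f q) : 0 ≤ gFn f q := div_nonneg hf (by linarith)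

theorem gFn_le (hf : 0 ≤ f q) : gFn f q ≤ f q := div_le_self hf (by linarith)

theorem abs_gFn_sub_gFn_le (hf : 0 ≤ f q) (hh : 0 ≤ h q) :
    |gFn f q - gFn h q| ≤ |f q - h q| := by
  have hsub : gFn f q - gFn h q = (f q - h q) / ((1 + f q) * (1 + h q)) := by
    unfold gFn
    field_simp
    ring
  have hden : 1 ≤ (1 + f q) * (1 + h q) :=
    one_le_mul_of_one_le_of_one_le (le_add_of_nonneg_right hf) (le_add_of_nonneg_right hh)
  rw [hsub, abs_div, abs_of_pos (zero_lt_one.trans_le hden)]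
  exact div_le_self (abs_nonneg _) hden

theorem cdfF_eq_mul_sub_gFn (hβ : β ∈ Ioo 0 1) (hp : p ∈ Icc β 1) (hq : q = (p - β) / (1 - β)) :
    cdfF f β p = (1 - β) / p * (q - gFn f q) := by
  have hp0 : p ≠ 0 := (hβ.1.trans_le hp.1).ne'
  have hβ1 : 1 - β ≠ 0 := (sub_pos.2 hβ.2).ne'
  rw [cdfF, if_neg (not_lt.2 hp.1), if_pos hp.2, ← hq, mul_sub]
  congr 1
  rw [hq]
  field_simp

theorem div_mul_le_one_sub (hβ : β ∈ Ioo 0 1) (hp : p ∈ Icc β 1) (hq : q = (p - β) / (1 - β)) :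
    (1 - β) / p * q ≤ 1 - β := by
  have hp0 : 0 < p := hβ.1.trans_le hp.1
  have hβ1 : 1 - β ≠ 0 := (sub_pos.2 hβ.2).ne'
  calc (1 - β) / p * q = 1 - β / p := by rw [hq]; field_simp
    _ ≤ 1 - β := sub_le_sub_left (le_div_self hβ.1.le hp0 hp.2) 1

theorem cdfF_mem_Icc (hβ : β ∈ Ioo 0 1) (hp : p ∈ Icc β 1) (hq : q = (p - β) / (1 - β))
    (hf : 0 ≤ f q) : cdfF f β p ∈ Icc ((1 - β) / p * (q - f q)) (1 - β) := by
  have hr : 0 ≤ (1 - β) / p := div_nonneg (sub_pos.2 hβ.2).le (hβ.1.trans_le hp.1).le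
  rw [cdfF_eq_mul_sub_gFn hβ hp hq]
  exact ⟨mul_le_mul_of_nonneg_left (sub_le_sub_left (gFn_le hf) q) hr,
    (mul_le_mul_of_nonneg_left (sub_le_self q (gFn_nonneg hf)) hr).trans
      (div_mul_le_one_sub hβ hp hq)⟩

theorem abs_cdfF_sub_cdfF_le (hβ : β ∈ Ioo 0 1) (hp : p ∈ Icc β 1) (hq : q = (p - β) / (1 - β))
    (hf : 0 ≤ f q) (hh : 0 ≤ h q) :
    |cdfF f β p - cdfF h β p| ≤ (1 - β) / p * |f q - h q| := by
  have hr : 0 ≤ (1 - β) / p := div_nonneg (sub_pos.2 hβ.2).le (hβ.1.trans_le hp.1).le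
  rw [cdfF_eq_mul_sub_gFn hβ hp hq, cdfF_eq_mul_sub_gFn hβ hp hq, ← mul_sub,
    sub_sub_sub_cancel_left, abs_mul, abs_of_nonneg hr, abs_sub_comm (f q)]
  exact mul_le_mul_of_nonneg_left (abs_gFn_sub_gFn_le hh hf) hr

theorem klBer_cdfF_le (hβ : β ∈ Ioo 0 1) (hp : p ∈ Icc β 1) (hq : q = (p - β) / (1 - β))
    (hf : 0 ≤ f q) (hfq : f q ≤ q) (hh : 0 ≤ h q) (hhq : h q < q) :
    klBer (cdfF f β p) (cdfF h β p) ≤ (1 - β) / β ^ 2 * ((f q - h q) ^ 2 / (q - h q)) := by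
  have hp0 : 0 < p := hβ.1.trans_le hp.1
  have hβ0 : 0 < β := hβ.1
  have hs : 0 < q - h q := sub_pos.2 hhq
  have hr : 0 < (1 - β) / p := div_pos (sub_pos.2 hβ.2) hp0
  have hF := cdfF_mem_Icc hβ hp hq hf
  have hH := cdfF_mem_Icc hβ hp hq hh
  have hF0 : 0 ≤ cdfF f β p := (mul_nonneg hr.le (sub_nonneg.2 hfq)).trans hF.1
  have hH0 : 0 < cdfF h β p := (mul_pos hr hs).trans_le hH.1
  have hnum : (cdfF f β p - cdfF h β p) ^ 2 ≤ ((1 - β) / p) ^ 2 * (f q - h q) ^ 2 := by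
    rw [← sq_abs, ← sq_abs (f q - h q), ← mul_pow]
    exact pow_le_pow_left₀ (abs_nonneg _) (abs_cdfF_sub_cdfF_le hβ hp hq hf hh) 2
  have hden : (1 - β) / p * (q - h q) * β ≤ cdfF h β p * (1 - cdfF h β p) :=
    mul_le_mul hH.1 (by linarith [hH.2]) hβ.1.le hH0.le
  calc klBer (cdfF f β p) (cdfF h β p)
      ≤ (cdfF f β p - cdfF h β p) ^ 2 / (cdfF h β p * (1 - cdfF h β p)) :=
        klBer_le_sq_div ⟨hF0, by linarith [hF.2]⟩ ⟨hH0, by linarith [hH.2]⟩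
    _ ≤ ((1 - β) / p) ^ 2 * (f q - h q) ^ 2 / ((1 - β) / p * (q - h q) * β) := by gcongr
    _ = (1 - β) / (p * β) * ((f q - h q) ^ 2 / (q - h q)) := by field_simp
    _ ≤ (1 - β) / β ^ 2 * ((f q - h q) ^ 2 / (q - h q)) := by
        rw [sq β]
        gcongr
        exacts [(sub_pos.2 hβ.2).le, hp.1]

end NoiseDistribution

section PerRound

variable {m k : ℕ} {cf β p q : ℝ} {a b : ℕ → ℝ}

theorem IsNestedTower.klBer_cdfF_towerFn_le (hab : IsNestedTower a b) (hm : 1 ≤ m)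
    (hcf : cf ∈ Icc 0 (1 / 18)) (hk : 1 ≤ k) (hβ : β ∈ Ioo 0 1) (hp : p ∈ Icc β 1)
    (hq : q = (p - β) / (1 - β)) (hqI : q ∈ Icc (a k) (b k)) :
    klBer (cdfF (towerFnBelow m k cf a b) β p) (cdfF (towerFn m cf a b) β p) ≤
      9 * ((1 - β) / β ^ 2) * cf ^ 2 * wSeq k ^ (2 * m) := by
  have hf := towerFnBelow_nonneg (m := m) a b q k hcf.1
  have hfh := towerFnBelow_le_towerFn a b q k hm hcf.1
  have hdiff := towerFn_sub_towerFnBelow_le a b q k hm hcf.1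
  have hgap : 1 / 4 ≤ q - towerFn m cf a b q := by
    linarith [towerFn_le a b q hm hcf.1, hab.one_third_le hk hqI, hcf.2]
  have hsq : (towerFnBelow m k cf a b q - towerFn m cf a b q) ^ 2 ≤
      (3 / 2 * cf * wSeq k ^ m) ^ 2 := by
    rw [sub_sq_comm]
    exact pow_le_pow_left₀ (sub_nonneg.2 hfh) hdiff 2
  have hβ' : 0 ≤ (1 - β) / β ^ 2 := div_nonneg (sub_pos.2 hβ.2).le (sq_nonneg β)
  calc klBer (cdfF (towerFnBelow m k cf a b) β p) (cdfF (towerFn m cf a b) β p)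
      ≤ (1 - β) / β ^ 2 * ((towerFnBelow m k cf a b q - towerFn m cf a b q) ^ 2 /
          (q - towerFn m cf a b q)) :=
        klBer_cdfF_le hβ hp hq hf (by linarith) (hf.trans hfh) (by linarith)
    _ ≤ (1 - β) / β ^ 2 * ((3 / 2 * cf * wSeq k ^ m) ^ 2 / (1 / 4)) := by gcongr
    _ = 9 * ((1 - β) / β ^ 2) * cf ^ 2 * wSeq k ^ (2 * m) := by ring

theorem IsNestedTower.klBer_cdfF_towerFn_eq_zero (hab : IsNestedTower a b)
    (hq : q = (p - β) / (1 - β)) (hqI : q ∉ Icc (a k) (b k)) :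
    klBer (cdfF (towerFnBelow m k cf a b) β p) (cdfF (towerFn m cf a b) β p) = 0 := by
  simp only [cdfF, gFn, ← hq, hab.towerFn_eq_towerFnBelow hqI, klBer_self]

theorem per_round_KL_bound_general (hm : 1 ≤ m) (hcf : cf ∈ Icc 0 (1 / 18)) (hk : 1 ≤ k)
    (hab : IsNestedTower a b) (hβ : β ∈ Ioo 0 1) (hp : p ∈ Icc β 1)
    (hq : q = (p - β) / (1 - β)) :
    (q ∈ Icc (a k) (b k) →
      klBer (1 - cdfF (towerFnBelow m k cf a b) β p) (1 - cdfF (towerFn m cf a b) β p) ≤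
        9 * ((1 - β) / β ^ 2) * cf ^ 2 * wSeq k ^ (2 * m)) ∧
    (q ∉ Icc (a k) (b k) →
      klBer (1 - cdfF (towerFnBelow m k cf a b) β p) (1 - cdfF (towerFn m cf a b) β p) = 0) := by
  rw [klBer_one_sub_one_sub]
  exact ⟨hab.klBer_cdfF_towerFn_le hm hcf hk hβ hp hq, hab.klBer_cdfF_towerFn_eq_zero hq⟩

theorem half_one_add_mul_L1_mem_Ico (hcf : 0 ≤ cf) (hcf' : cf < 1 / (L1 + 6)) :
    (1 + cf * L1) / 2 ∈ Ico (1 / 2) 1 := by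
  have hL := L1_nonneg
  have hprod : 0 ≤ cf * L1 := mul_nonneg hcf hL
  rw [lt_div_iff₀ (by linarith)] at hcf'
  constructor <;> linarith

theorem nine_mul_sq_le_of_half_le (hβ : 1 / 2 ≤ β) (hcf : cf ∈ Icc 0 (1 / 10000)) :
    9 * ((1 - β) / β ^ 2) * cf ^ 2 ≤ 1 / 300 := by
  have hratio : (1 - β) / β ^ 2 ≤ 2 := by
    rw [div_le_iff₀ (by positivity)]
    nlinarith
  have hsq : cf ^ 2 ≤ (1 / 10000) ^ 2 := pow_le_pow_left₀ hcf.1 hcf.2 2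
  calc 9 * ((1 - β) / β ^ 2) * cf ^ 2 ≤ 9 * 2 * (1 / 10000) ^ 2 := by gcongr
    _ ≤ 1 / 300 := by norm_num

end PerRound

/-- Per-round KL bound between the instances `F₀` and `F_j`.  Here `a, b` is a full
admissible nested tower whose level-`k` interval is the `j`-th cell
`I_j` of the level-`k` grid, `F_j` is built from the full tower and `F₀` from its
truncation below level `k`.  For `p ∈ [b,1]` and `q = (p−b)/(1−b)`:
`KL(Ber(1−F₀(p)) ‖ Ber(1−F_j(p))) ≤ w_k^{2m}/300` if `q ∈ I_j` and `= 0` if `q ∉ I_j`. -/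
theorem per_round_KL_bound (m : ℕ) (hm : 1 ≤ m) (cf : ℝ)
    (hcf : 0 < cf) (hcf' : cf < 1 / (L1 + 6)) (hcf'' : cf < 1 / 10000)
    (k : ℕ) (hk : 3 ≤ k)
    (a b : ℕ → ℝ) (hab : IsNestedTower a b)
    (j : ℕ) (hj1 : 1 ≤ j) (hjQ : (j : ℝ) ≤ wSeq (k - 1) / (3 * wSeq k))
    (hak : a k = a (k - 1) + wSeq (k - 1) / 3 + ((j : ℝ) - 1) * wSeq k)
    (β : ℝ) (hβ : β = (1 + cf * L1) / 2)
    (p : ℝ) (hp : p ∈ Set.Icc β 1) (q : ℝ) (hq : q = (p - β) / (1 - β)) :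
    (q ∈ Set.Icc (a k) (b k) →
      klBer (1 - cdfF (towerFnBelow m k cf a b) β p) (1 - cdfF (towerFn m cf a b) β p) ≤
        1 / 300 * wSeq k ^ (2 * m)) ∧
    (q ∉ Set.Icc (a k) (b k) →
      klBer (1 - cdfF (towerFnBelow m k cf a b) β p) (1 - cdfF (towerFn m cf a b) β p)
        = 0) := by
  have hβI : β ∈ Ico (1 / 2) 1 := hβ ▸ half_one_add_mul_L1_mem_Ico hcf.le hcf'
  have hβ0 : β ∈ Ioo 0 1 := Ico_subset_Ioo_left (by norm_num) hβI
  have hcfI : cf ∈ Icc 0 (1 / 18) := ⟨hcf.le, by linarith⟩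
  refine (per_round_KL_bound_general hm hcfI (by omega) hab hβ0 hp hq).imp_left
    fun hbound hqI => (hbound hqI).trans ?_
  exact mul_le_mul_of_nonneg_right (nine_mul_sq_le_of_half_le hβI.1 ⟨hcf.le, hcf''.le⟩)
    (pow_nonneg (wSeq_pos k).le _)
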